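/- arXiv:1409.7883 — 2 statements merged into one kernel-verified Lean document; each statement's English description precedes it below -/
import Mathlib

section
/- Let K be an algebraically closed field and let f : K^n → K^n be a non-special polynomial automorphism, i.e., Jac(f) ≠ 1. Let h ∈ K[x_1,…,x_n] be a nonconstant squarefree polynomial whose zero set H = Z(h) is contained in Fix(f). Then H = Fix(f), i.e., Fix(f) = {x ∈ K^n : h(x) = 0}. -/
/-!
Write `φ` for the substitution `p ↦ p ∘ F` and `ψ` for `p ↦ p ∘ G`, where `G` is the inverse of `F`.

* Since `h` is squarefree, the Nullstellensatz says that `h` divides every polynomial vanishing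
  on `Z(h)`. Hence `F_i = x_i + h g_i` for some `g_i`, and `h ∣ φ h`, `h ∣ ψ h` because both `F`
  and `G` fix `Z(h)` pointwise. As `ψ (φ h) = h`, the cofactor of `h` in `φ h` is a unit, so
  `φ h = c h` with `c` a nonzero constant.
* First-order Taylor expansion gives `φ h ≡ h + h ∑ g_i ∂_i h` modulo `h²`, so
  `c ≡ 1 + ∑ g_i ∂_i h` modulo `h`.
* Modulo `h` the Jacobian matrix of `F` is the identity plus the rank one matrix `g_i ∂_j h`,
  so `Jac F ≡ 1 + ∑ g_i ∂_i h ≡ c` modulo `h`. By the chain rule `Jac F` is a unit, that is, a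
  constant, and `h` is not constant, so `Jac F = c`.

Thus `c ≠ 1`, and at a fixed point `x` of `F` one has `h(x) = h(F(x)) = c h(x)`, so `h(x) = 0`.
-/

open MvPolynomial

/-- The polynomial map `K^n → K^n` induced by the component polynomials `F i`. -/
noncomputable def evalMap {K : Type*} [CommSemiring K] {n : ℕ}
    (F : Fin n → MvPolynomial (Fin n) K) : (Fin n → K) → (Fin n → K) :=
  fun x i => eval x (F i)

/-- `F` defines a polynomial automorphism of `K^n`: the induced map is bijective with a
polynomial inverse. -/
def IsPolyAut {K : Type*} [CommSemiring K] {n : ℕ}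
    (F : Fin n → MvPolynomial (Fin n) K) : Prop :=
  ∃ G : Fin n → MvPolynomial (Fin n) K,
    (∀ x, evalMap F (evalMap G x) = x) ∧ (∀ x, evalMap G (evalMap F x) = x)

/-- The Jacobian of the polynomial map `F`: the determinant of the matrix of partial
derivatives `∂F_i/∂x_j` (for a polynomial automorphism it is a nonzero constant). -/
noncomputable def jacPoly {K : Type*} [CommRing K] {n : ℕ}
    (F : Fin n → MvPolynomial (Fin n) K) : MvPolynomial (Fin n) K :=
  (Matrix.of fun i j => pderiv j (F i)).det

/-- A form of the Nullstellensatz for a principal ideal with squarefree generator. -/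
theorem dvd_of_vanishing {K : Type*} [Field K] [IsAlgClosed K] {n : ℕ}
    {h p : MvPolynomial (Fin n) K} (hsf : Squarefree h)
    (hp : ∀ x : Fin n → K, eval x h = 0 → eval x p = 0) : h ∣ p := by
  have key : p ∈ vanishingIdeal K (zeroLocus K (Ideal.span {h})) := by
    rw [mem_vanishingIdeal_iff]
    intro x hx
    exact hp x (hx h (Ideal.mem_span_singleton_self h))
  rw [vanishingIdeal_zeroLocus_eq_radical] at key
  obtain ⟨k, hk⟩ := key
  exact hsf.isRadical k p (Ideal.mem_span_singleton.mp hk)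

/-- The chain rule for polynomial substitution. -/
theorem pderiv_bind₁_eq_sum {K : Type*} [Field K] {n : ℕ}
    (F : Fin n → MvPolynomial (Fin n) K) (j : Fin n) (p : MvPolynomial (Fin n) K) :
    pderiv j (bind₁ F p) = ∑ k, bind₁ F (pderiv k p) * pderiv j (F k) := by
  classical
  induction p using MvPolynomial.induction_on with
  | C a => simp
  | add p q hp hq => simp [hp, hq, add_mul, Finset.sum_add_distrib]
  | mul_X p i hp =>
    rw [map_mul, pderiv_mul, hp, bind₁_X_right]
    have hs : ∑ k, bind₁ F p * bind₁ F (pderiv k (X i : MvPolynomial (Fin n) K)) * pderiv j (F k)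
        = bind₁ F p * pderiv j (F i) := by
      rw [Finset.sum_eq_single i]
      · simp
      · intro b _ hb
        simp [pderiv_X_of_ne hb.symm]
      · simp
    simp only [pderiv_mul, map_add, map_mul, add_mul, Finset.sum_add_distrib, hs, bind₁_X_right,
      Finset.sum_mul]
    rw [add_left_inj]
    exact Finset.sum_congr rfl fun k _ => mul_right_comm _ _ _

/-- First-order Taylor expansion of `p (x + h g)` in powers of `h`. -/
theorem bind₁_taylor {K : Type*} [Field K] {n : ℕ}
    (h : MvPolynomial (Fin n) K) (g : Fin n → MvPolynomial (Fin n) K)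
    (p : MvPolynomial (Fin n) K) :
    ∃ q, bind₁ (fun i => X i + h * g i) p = p + h * ∑ i, g i * pderiv i p + h ^ 2 * q := by
  classical
  induction p using MvPolynomial.induction_on with
  | C a => exact ⟨0, by simp⟩
  | add p q hp hq =>
    obtain ⟨a, ha⟩ := hp
    obtain ⟨b, hb⟩ := hq
    refine ⟨a + b, ?_⟩
    simp only [map_add, ha, hb, mul_add, Finset.sum_add_distrib]
    ring
  | mul_X p i hp =>
    obtain ⟨a, ha⟩ := hp
    have hs : ∑ k, g k * pderiv k (p * X i) = (∑ k, g k * pderiv k p) * X i + p * g i := by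
      simp only [pderiv_mul, mul_add, Finset.sum_add_distrib, Finset.sum_mul]
      congr 1
      · exact Finset.sum_congr rfl fun k _ => by ring
      · rw [Finset.sum_eq_single i]
        · simp [mul_comm]
        · intro b _ hb
          simp [pderiv_X_of_ne hb.symm]
        · simp
    refine ⟨a * (X i + h * g i) + (∑ k, g k * pderiv k p) * g i, ?_⟩
    rw [map_mul, ha, bind₁_X_right, hs]
    ring

/-- Modulo `h`, the Jacobian matrix of `x + h g` is a rank one perturbation of the identity. -/
theorem dvd_jacPoly_sub {K : Type*} [Field K] {n : ℕ}
    (h : MvPolynomial (Fin n) K) (g : Fin n → MvPolynomial (Fin n) K) :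
    h ∣ jacPoly (fun i => X i + h * g i) - (1 + ∑ i, g i * pderiv i h) := by
  classical
  rw [← Ideal.mem_span_singleton, ← Ideal.Quotient.mk_eq_mk_iff_sub_mem]
  set π := Ideal.Quotient.mk (Ideal.span {h})
  have hπ : π h = 0 := Ideal.Quotient.eq_zero_iff_mem.mpr (Ideal.mem_span_singleton_self h)
  have hM : π.mapMatrix (Matrix.of fun i j => pderiv j (X i + h * g i)) =
      1 + Matrix.replicateCol Unit (fun i => π (g i)) *
        Matrix.replicateRow Unit (fun j => π (pderiv j h)) := by
    ext i j
    have hX : π (pderiv j (X i)) = (1 : Matrix (Fin n) (Fin n) _) i j := by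
      rw [pderiv_X, Matrix.one_apply, Pi.single_apply]
      split_ifs <;> simp_all
    simp [-pderiv_X, Matrix.mul_apply, hπ, hX]
  rw [jacPoly, RingHom.map_det, hM, Matrix.det_one_add_replicateCol_mul_replicateRow]
  simp [dotProduct, mul_comm]

/-- If `G ∘ F = id`, the chain rule makes the Jacobian of `F` invertible. -/
theorem isUnit_jacPoly {K : Type*} [Field K] {n : ℕ}
    (F G : Fin n → MvPolynomial (Fin n) K) (hGF : ∀ i, bind₁ F (G i) = X i) :
    IsUnit (jacPoly F) := by
  classical
  have hM : (Matrix.of fun i k => bind₁ F (pderiv k (G i))) *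
      (Matrix.of fun k j => pderiv j (F k)) = 1 := by
    ext1 i j
    rw [Matrix.mul_apply]
    simp only [Matrix.of_apply]
    rw [← pderiv_bind₁_eq_sum, hGF, pderiv_X, Matrix.one_apply, Pi.single_apply]
  have hd := congrArg Matrix.det hM
  rw [Matrix.det_mul, Matrix.det_one] at hd
  exact IsUnit.of_mul_eq_one_right _ hd

theorem eval_bind₁_eq {K : Type*} [Field K] {n : ℕ}
    (F : Fin n → MvPolynomial (Fin n) K) (x : Fin n → K) (p : MvPolynomial (Fin n) K) :
    eval x (bind₁ F p) = eval (evalMap F x) p :=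
  eval₂Hom_bind₁ _ _ _ _

/-- If `f` is a non-special polynomial automorphism of `K^n`
(`Jac(f) ≠ 1`) and `h` is a nonconstant squarefree polynomial with `Z(h) ⊆ Fix(f)`,
then `Fix(f) = Z(h)`. -/
theorem fix_eq_hypersurface_of_nonspecial {K : Type*} [Field K] [IsAlgClosed K]
    {n : ℕ} (F : Fin n → MvPolynomial (Fin n) K) (hF : IsPolyAut F)
    (hjac : jacPoly F ≠ 1)
    (h : MvPolynomial (Fin n) K) (hdeg : h.totalDegree ≠ 0) (hsf : Squarefree h)
    (hsub : ∀ x : Fin n → K, eval x h = 0 → evalMap F x = x) :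
    {x : Fin n → K | evalMap F x = x} = {x : Fin n → K | eval x h = 0} := by
  obtain ⟨G, hFG, hGF⟩ := hF
  have : Infinite K := IsAlgClosed.instInfinite
  have hsubG : ∀ x : Fin n → K, eval x h = 0 → evalMap G x = x := fun x hx => by
    have := hGF x
    rwa [hsub x hx] at this
  have h0 : h ≠ 0 := by
    rintro rfl
    exact hdeg totalDegree_zero
  have hconst : ∀ a : K, h ∣ C a → a = 0 := fun a ha => by
    by_contra hne
    have hu : IsUnit h := isUnit_of_dvd_unit ha ((Ne.isUnit hne).map C)
    exact hdeg (isUnit_iff_totalDegree_of_isReduced.mp hu).2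
  have hg : ∀ i, ∃ g, F i = X i + h * g := fun i => by
    obtain ⟨g, hg⟩ := dvd_of_vanishing (p := F i - X i) hsf fun x hx => by
      have := congrFun (hsub x hx) i
      simp only [evalMap] at this
      simp [this]
    exact ⟨g, by rw [← hg]; ring⟩
  choose g hg using hg
  obtain ⟨u, hu⟩ := dvd_of_vanishing (p := bind₁ F h) hsf fun x hx => by
    rw [eval_bind₁_eq, hsub x hx, hx]
  obtain ⟨v, hv⟩ := dvd_of_vanishing (p := bind₁ G h) hsf fun x hx => by
    rw [eval_bind₁_eq, hsubG x hx, hx]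
  have hback : bind₁ G (bind₁ F h) = h := MvPolynomial.funext fun x => by
    rw [eval_bind₁_eq, eval_bind₁_eq, hFG]
  have hψu : IsUnit (bind₁ G u) := by
    rw [hu, map_mul, hv, mul_assoc] at hback
    exact IsUnit.of_mul_eq_one_right _ (mul_left_cancel₀ h0 (hback.trans (mul_one h).symm))
  have hunit : IsUnit u := by
    have hφψ : bind₁ F (bind₁ G u) = u := MvPolynomial.funext fun x => by
      rw [eval_bind₁_eq, eval_bind₁_eq, hGF]
    rw [← hφψ]
    exact hψu.map (bind₁ F)
  obtain ⟨c, -, rfl⟩ := isUnit_iff_eq_C_of_isReduced.mp hunit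
  have hFeq : F = fun i => X i + h * g i := _root_.funext hg
  obtain ⟨q, hq⟩ := bind₁_taylor h g h
  rw [← hFeq, hu] at hq
  have hc : C c = 1 + ∑ i, g i * pderiv i h + h * q :=
    mul_left_cancel₀ h0 (by rw [hq]; ring)
  obtain ⟨r, hr⟩ := dvd_jacPoly_sub h g
  rw [← hFeq] at hr
  obtain ⟨a, -, ha⟩ := isUnit_iff_eq_C_of_isReduced.mp
    (isUnit_jacPoly F G fun i => MvPolynomial.funext fun x => by
      rw [eval_bind₁_eq, eval_X]
      exact congrFun (hGF x) i)
  have hac : a - c = 0 := hconst _ ⟨r - q, by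
    rw [C_sub, ← ha, hc]
    linear_combination hr⟩
  have hc1 : c ≠ 1 := by
    rintro rfl
    exact hjac (by rw [ha, sub_eq_zero.mp hac, C_1])
  ext x
  refine ⟨fun hx => ?_, hsub x⟩
  have hx' : evalMap F x = x := hx
  have hev := congrArg (eval x) hu
  rw [eval_bind₁_eq, hx', map_mul, eval_C] at hev
  have hz : eval x h * (c - 1) = 0 := by linear_combination -hev
  exact (mul_eq_zero.mp hz).resolve_right (sub_ne_zero.mpr hc1)
end

section
/- Let h ∈ ℂ[x,y] be a polynomial and define g : ℂ⁴ → ℂ⁴ by g(x,y,z,w) = (x, y + z + h(x,y), z + h(x,y), 2w). Then g is a non-special polynomial automorphism of ℂ⁴ with Jac(g) = 2, and its set of fixed points is Fix(g) = {(x, y, 0, 0) ∈ ℂ⁴ : h(x,y) = 0}; in particular Fix(g) is isomorphic to the plane curve Γ = {(x,y) ∈ ℂ² : h(x,y) = 0} and need not be a hypersurface. -/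
/-!
The first coordinate is fixed by `g`, and the difference of its second and third coordinates
recovers `y`; hence `z` is recovered by subtracting `h(x, y)`, and the inverse is
`(a, b, c, d) ↦ (a, b - c, c - h(a, b - c), d / 2)`.

In the Jacobian matrix the second and third rows differ by `(0, 1, 0, 0)`, so the partial
derivatives of `h` cancel from the determinant, leaving the factor `2` of the last coordinate.

At a fixed point the second equation gives `z + h(x, y) = 0`, the third then gives `z = 0`,
and the last gives `w = 0`. So the fixed points are the points `(x, y, 0, 0)` over the curve
`h = 0`, and `y ↦ (y 0, y 1, 0, 0)` inverts the projection.
-/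

open MvPolynomial

/-- The inclusion `Fin 2 → Fin 4` of the first two coordinates. -/
def incl24 : Fin 2 → Fin 4 := Fin.castLE (by norm_num)

/-- The components of the map `g(x,y,z,w) = (x, y + z + h(x,y), z + h(x,y), 2w)` on `ℂ⁴`,
where `h` is a polynomial in the two variables `x = X 0`, `y = X 1`. -/
noncomputable def exampleG (h : MvPolynomial (Fin 2) ℂ) : Fin 4 → MvPolynomial (Fin 4) ℂ :=
  ![X 0, X 1 + X 2 + rename incl24 h, X 2 + rename incl24 h, MvPolynomial.C 2 * X 3]

/-- The components of the inverse `(a, b, c, d) ↦ (a, b - c, c - h(a, b - c), d / 2)` of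
`exampleG h`. -/
noncomputable def exampleGInv (h : MvPolynomial (Fin 2) ℂ) : Fin 4 → MvPolynomial (Fin 4) ℂ :=
  ![X 0, X 1 - X 2, X 2 - bind₁ ![X 0, X 1 - X 2] h, MvPolynomial.C (1 / 2) * X 3]

lemma evalMap_exampleG (h : MvPolynomial (Fin 2) ℂ) (x : Fin 4 → ℂ) :
    evalMap (exampleG h) x =
      ![x 0, x 1 + x 2 + eval ![x 0, x 1] h, x 2 + eval ![x 0, x 1] h, 2 * x 3] := by
  have hx : x ∘ incl24 = ![x 0, x 1] := by
    funext i; fin_cases i <;> rfl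
  funext i
  fin_cases i <;> simp [evalMap, exampleG, eval_rename, hx]

lemma evalMap_exampleGInv (h : MvPolynomial (Fin 2) ℂ) (x : Fin 4 → ℂ) :
    evalMap (exampleGInv h) x =
      ![x 0, x 1 - x 2, x 2 - eval ![x 0, x 1 - x 2] h, 1 / 2 * x 3] := by
  have hx : eval x (bind₁ ![X 0, X 1 - X 2] h) = eval ![x 0, x 1 - x 2] h := by
    have hc := map_aeval ![X 0, X 1 - X 2] (eval x) h
    have hC : (eval x).comp (algebraMap ℂ (MvPolynomial (Fin 4) ℂ)) = RingHom.id ℂ := by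
      ext <;> simp [algebraMap_eq]
    have hv : (fun i => eval x (![X 0, X 1 - X 2] i)) = ![x 0, x 1 - x 2] := by
      funext i; fin_cases i <;> simp
    rw [← aeval_eq_bind₁, hc, hC, hv]
    rfl
  funext i
  fin_cases i <;> simp [evalMap, exampleGInv, hx]

lemma isPolyAut_exampleG (h : MvPolynomial (Fin 2) ℂ) : IsPolyAut (exampleG h) := by
  refine ⟨exampleGInv h, fun x => ?_, fun x => ?_⟩ <;>
    rw [evalMap_exampleG, evalMap_exampleGInv] <;> funext i <;> fin_cases i <;> simp

/-- `h(x, y)` does not involve the variables outside the range of `incl24`. -/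
lemma pderiv_rename_incl24 (h : MvPolynomial (Fin 2) ℂ) (j : Fin 4) (hj : ∀ i, incl24 i ≠ j) :
    pderiv j (rename incl24 h) = 0 := by
  classical
  refine pderiv_eq_zero_of_notMem_vars fun hmem => ?_
  obtain ⟨i, -, hi⟩ := Finset.mem_image.1 (vars_rename incl24 h hmem)
  exact hj i hi

lemma jacPoly_exampleG (h : MvPolynomial (Fin 2) ℂ) :
    jacPoly (exampleG h) = MvPolynomial.C 2 := by
  have h2 := pderiv_rename_incl24 h 2 (by decide)
  have h3 := pderiv_rename_incl24 h 3 (by decide)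
  have hM : (Matrix.of fun i j => pderiv j (exampleG h i)) =
      !![1, 0, 0, 0;
         pderiv 0 (rename incl24 h), 1 + pderiv 1 (rename incl24 h), 1, 0;
         pderiv 0 (rename incl24 h), pderiv 1 (rename incl24 h), 1, 0;
         0, 0, 0, MvPolynomial.C 2] := by
    ext1 i j
    fin_cases i <;> fin_cases j <;> simp [exampleG, pderiv_X, h2, h3]
  rw [jacPoly, hM]
  simp [Matrix.det_succ_row_zero, Fin.sum_univ_succ, Fin.succAbove]
  ring

lemma evalMap_exampleG_eq_self_iff (h : MvPolynomial (Fin 2) ℂ) (x : Fin 4 → ℂ) :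
    evalMap (exampleG h) x = x ↔
      eval (fun i : Fin 2 => x (incl24 i)) h = 0 ∧ x 2 = 0 ∧ x 3 = 0 := by
  have hx : (fun i : Fin 2 => x (incl24 i)) = ![x 0, x 1] := by
    funext i; fin_cases i <;> rfl
  rw [evalMap_exampleG, hx, funext_iff, Fin.forall_fin_succ, Fin.forall_fin_succ,
    Fin.forall_fin_succ, Fin.forall_fin_one]
  change x 0 = x 0 ∧ x 1 + x 2 + eval ![x 0, x 1] h = x 1 ∧ x 2 + eval ![x 0, x 1] h = x 2 ∧
    2 * x 3 = x 3 ↔ _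
  constructor
  · rintro ⟨-, h1, h2, h3⟩
    exact ⟨by linear_combination h2, by linear_combination h1 - h2, by linear_combination h3⟩
  · rintro ⟨h1, h2, h3⟩
    simp [h1, h2, h3]

/-- For any `h ∈ ℂ[x,y]`, the map
`g(x,y,z,w) = (x, y + z + h(x,y), z + h(x,y), 2w)` is a polynomial automorphism of `ℂ⁴`
with `Jac(g) = 2` (so `g` is non-special), and
`Fix(g) = {(x,y,0,0) : h(x,y) = 0}`; in particular the projection `(x,y,0,0) ↦ (x,y)` is
a bijection (an isomorphism) from `Fix(g)` onto the plane curve `Γ = {(x,y) : h(x,y) = 0}`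
(which need not be a hypersurface of `ℂ⁴`). -/
theorem example_nonspecial_automorphism_fix (h : MvPolynomial (Fin 2) ℂ) :
    IsPolyAut (exampleG h) ∧
    jacPoly (exampleG h) = MvPolynomial.C 2 ∧
    jacPoly (exampleG h) ≠ 1 ∧
    {x : Fin 4 → ℂ | evalMap (exampleG h) x = x}
      = {x : Fin 4 → ℂ | eval (fun i : Fin 2 => x (incl24 i)) h = 0 ∧ x 2 = 0 ∧ x 3 = 0} ∧
    Set.BijOn (fun (x : Fin 4 → ℂ) (i : Fin 2) => x (incl24 i))
      {x : Fin 4 → ℂ | evalMap (exampleG h) x = x}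
      {y : Fin 2 → ℂ | eval y h = 0} := by
  have hfix := Set.ext (evalMap_exampleG_eq_self_iff h)
  refine ⟨isPolyAut_exampleG h, jacPoly_exampleG h, ?_, hfix, ?_⟩
  · rw [jacPoly_exampleG, ← C_1, Ne, C_inj]
    norm_num
  · rw [hfix]
    refine ⟨fun x hx => hx.1, ?_, fun y hy => ⟨![y 0, y 1, 0, 0], ?_, ?_⟩⟩
    · rintro x ⟨-, hx2, hx3⟩ x' ⟨-, hx2', hx3'⟩ hxx'
      have e0 : x 0 = x' 0 := congrFun hxx' 0
      have e1 : x 1 = x' 1 := congrFun hxx' 1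
      funext i
      fin_cases i
      exacts [e0, e1, hx2.trans hx2'.symm, hx3.trans hx3'.symm]
    · have hy' : (fun i : Fin 2 => ![y 0, y 1, 0, 0] (incl24 i)) = y := by
        funext i; fin_cases i <;> rfl
      exact ⟨by rw [hy']; exact hy, rfl, rfl⟩
    · funext i; fin_cases i <;> rfl
end
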